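/- Let G be a strongly connected directed graph on n vertices with self-loops at every vertex, F_q a finite field with q ≥ (n³+n)/2, with entries of A on edges and entries of x iid uniform over F_q. Then the probability that the Hankel matrices H_n^{(r)} are simultaneously invertible for all r = 1,…,n is at least 1 − (n³+n)/(2q). -/

import Mathlib

open Matrix

/-- The matrix built from a weight assignment `w` on the edges of the graph `E`
(`E v u` meaning there is an edge from `v` to `u`): the entry `A u v` is the weight
of the edge `(v, u)` if it exists, and `0` otherwise. -/
def graphMat {n : ℕ} {F : Type*} [Field F] (E : Fin n → Fin n → Prop) [DecidableRel E]
    (w : {p : Fin n × Fin n // E p.1 p.2} → F) : Matrix (Fin n) (Fin n) F :=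
  Matrix.of fun u v => if h : E v u then w ⟨(v, u), h⟩ else 0

/-!
The Hankel matrix `H_n^(r)` is the product of the transposed Krylov matrix of `(Aᵀ, e_r)` and the
Krylov matrix of `(A, x)`. So all of them are invertible as soon as one product of `n + 1` Krylov
determinants is nonzero, and in the edge weights and the entries of `x` this product is a
polynomial of degree at most `(n³ + n) / 2`. By the Schwartz-Zippel lemma it remains to see that
it is not the zero polynomial. Take a spanning tree of the graph directed towards `r`, with
pairwise distinct weights on its loops and weight `1` on its edges: each loop weight is an
eigenvalue, with an explicit eigenvector whose value at `r` is `1`, and in these eigenvectors the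
Krylov matrix of `(Aᵀ, e_r)` becomes a Vandermonde matrix. For the Krylov matrix of `(A, x)`, put
`x = e_s` and reverse the edges of the graph.
-/

section SpanningInTree

/-- `r` can be reached from `v` along `E` by a walk of length `k`. -/
inductive WalkTo {V : Type*} (E : V → V → Prop) (r : V) : ℕ → V → Prop
  | refl : WalkTo E r 0 r
  | cons {k : ℕ} {v u : V} : E v u → WalkTo E r k u → WalkTo E r (k + 1) v

/-- A spanning tree of the relation `E` whose edges are directed towards the root `r`, given by the
parent of each vertex and its distance to the root in the tree. The parent of `r` is unspecified. -/
structure SpanningInTree {V : Type*} (E : V → V → Prop) (r : V) where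
  parent : V → V
  depth : V → ℕ
  depth_root : depth r = 0
  adj_parent : ∀ v, v ≠ r → E v (parent v)
  depth_parent : ∀ v, v ≠ r → depth (parent v) + 1 = depth v

variable {V : Type*} {E : V → V → Prop} {r : V}

theorem exists_walkTo_of_reflTransGen {v : V} (h : Relation.ReflTransGen E v r) :
    ∃ k, WalkTo E r k v := by
  induction h using Relation.ReflTransGen.head_induction_on with
  | refl => exact ⟨0, .refl⟩
  | head hvu _ ih =>
    obtain ⟨k, hk⟩ := ih
    exact ⟨k + 1, .cons hvu hk⟩

-- Breadth-first search: the parent of `v` is the second vertex of a shortest walk from `v` to `r`.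
theorem nonempty_spanningInTree (h : ∀ v, Relation.ReflTransGen E v r) :
    Nonempty (SpanningInTree E r) := by
  classical
  have hwalk (v : V) : ∃ k, WalkTo E r k v := exists_walkTo_of_reflTransGen (h v)
  let dist (v : V) : ℕ := Nat.find (hwalk v)
  have dist_le {k : ℕ} {v : V} (hk : WalkTo E r k v) : dist v ≤ k := Nat.find_min' _ hk
  have walkTo_dist (v : V) : WalkTo E r (dist v) v := Nat.find_spec (hwalk v)
  have hparent (v : V) : ∃ u, v ≠ r → E v u ∧ dist u + 1 = dist v := by
    generalize hk : dist v = k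
    obtain _ | @⟨k, _, u, hvu, hu⟩ := hk ▸ walkTo_dist v
    · exact ⟨r, fun hv => absurd rfl hv⟩
    · have hle : dist v ≤ dist u + 1 := dist_le (.cons hvu (walkTo_dist u))
      have hge : dist u ≤ k := dist_le hu
      exact ⟨u, fun _ => ⟨hvu, by omega⟩⟩
  choose parent hparent using hparent
  exact ⟨⟨parent, dist, Nat.le_zero.1 (dist_le .refl), fun v hv => (hparent v hv).1,
    fun v hv => (hparent v hv).2⟩⟩

namespace SpanningInTree

variable (T : SpanningInTree E r)

theorem eq_root_of_depth_eq_zero {v : V} (hv : T.depth v = 0) : v = r := by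
  by_contra hvr
  have := T.depth_parent v hvr
  omega

theorem depth_iterate_parent {v : V} {i : ℕ} (hi : i ≤ T.depth v) :
    T.depth (T.parent^[i] v) = T.depth v - i := by
  induction i with
  | zero => rfl
  | succ i ih =>
    have hdepth := ih (by omega)
    have hne : T.parent^[i] v ≠ r := by
      intro hr
      rw [hr, T.depth_root] at hdepth
      omega
    have := T.depth_parent _ hne
    rw [Function.iterate_succ_apply']
    omega

/-- The ancestor of `v` at depth `j`, meaningful only for `j ≤ T.depth v` because of the truncated
subtraction. -/
def ancestor (v : V) (j : ℕ) : V :=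
  T.parent^[T.depth v - j] v

theorem depth_ancestor {v : V} {j : ℕ} (hj : j ≤ T.depth v) : T.depth (T.ancestor v j) = j := by
  rw [ancestor, T.depth_iterate_parent (Nat.sub_le _ _), Nat.sub_sub_self hj]

theorem ancestor_zero (v : V) : T.ancestor v 0 = r :=
  T.eq_root_of_depth_eq_zero (T.depth_ancestor (Nat.zero_le _))

theorem ancestor_depth (v : V) : T.ancestor v (T.depth v) = v := by
  rw [ancestor, Nat.sub_self, Function.iterate_zero_apply]

theorem ancestor_succ_ne_root {v : V} {j : ℕ} (hj : j < T.depth v) :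
    T.ancestor v (j + 1) ≠ r := by
  intro hr
  have := T.depth_ancestor hj
  rw [Nat.succ_eq_add_one, hr, T.depth_root] at this
  omega

theorem parent_ancestor_succ {v : V} {j : ℕ} (hj : j < T.depth v) :
    T.parent (T.ancestor v (j + 1)) = T.ancestor v j := by
  have hsub : T.depth v - j = (T.depth v - (j + 1)) + 1 := by omega
  rw [ancestor, ancestor, hsub, Function.iterate_succ_apply']

variable {R : Type*} [CommRing R]

/-- The coordinate at `T.ancestor v j` of the eigenvector `T.eigenvector d v`. The recursion
`eigencoeff_succ` is the eigenvalue equation at this ancestor, solved from the root on. -/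
def eigencoeff (d : V → R) (v : V) (j : ℕ) : R :=
  ∏ k ∈ Finset.range j, (d v - d (T.ancestor v k))

theorem eigencoeff_succ (d : V → R) (v : V) (j : ℕ) :
    T.eigencoeff d v (j + 1) = T.eigencoeff d v j * (d v - d (T.ancestor v j)) :=
  Finset.prod_range_succ _ _

theorem eigencoeff_depth_succ (d : V → R) (v : V) : T.eigencoeff d v (T.depth v + 1) = 0 := by
  rw [eigencoeff_succ, ancestor_depth, sub_self, mul_zero]

variable [DecidableEq V]

/-- The weighted adjacency matrix of the tree, with weight `d v` on the loop at `v` and weight `1`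
on each edge from a vertex to its parent. As in `graphMat`, columns index the sources of edges. -/
def toMatrix (d : V → R) : Matrix V V R :=
  diagonal d + of fun u v => if v = r then 0 else Pi.single (T.parent v) 1 u

theorem toMatrix_apply_eq_zero (hloop : ∀ v, E v v) (d : V → R) {u v : V} (h : ¬ E v u) :
    T.toMatrix d u v = 0 := by
  have hne : u ≠ v := by
    rintro rfl
    exact h (hloop u)
  have hparent (hv : v ≠ r) : u ≠ T.parent v := by
    rintro rfl
    exact h (T.adj_parent v hv)
  rw [toMatrix, Matrix.add_apply, diagonal_apply_ne _ hne, zero_add, of_apply]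
  split_ifs with hv
  · rfl
  · exact Pi.single_eq_of_ne (hparent hv) 1

/-- The eigenvector of `T.toMatrix d` for the loop weight `d v`, supported on the ancestors of `v`
and normalized to take the value `1` at the root. -/
def eigenvector (d : V → R) (v : V) : V → R :=
  ∑ j ∈ Finset.range (T.depth v + 1), T.eigencoeff d v j • Pi.single (T.ancestor v j) 1

theorem eigenvector_root (d : V → R) (v : V) : T.eigenvector d v r = 1 := by
  have hne (j : ℕ) (hj : j ∈ Finset.range (T.depth v)) : r ≠ T.ancestor v (j + 1) :=
    (T.ancestor_succ_ne_root (Finset.mem_range.1 hj)).symm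
  rw [eigenvector, Finset.sum_apply, Finset.sum_range_succ', Finset.sum_eq_zero fun j hj => by
    rw [Pi.smul_apply, Pi.single_eq_of_ne (hne j hj), smul_zero]]
  simp [eigencoeff, ancestor_zero]

variable [Fintype V]

theorem toMatrix_mulVec_single (d : V → R) (v : V) :
    T.toMatrix d *ᵥ Pi.single v 1 =
      d v • Pi.single v 1 + if v = r then 0 else Pi.single (T.parent v) 1 := by
  rw [toMatrix, add_mulVec, diagonal_mulVec_single, ← Pi.single_smul, smul_eq_mul,
    mulVec_single_one]
  congr 1
  split_ifs with hv <;> ext u <;> simp [hv]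

theorem toMatrix_mulVec_single_ancestor_succ (d : V → R) {v : V} {j : ℕ} (hj : j < T.depth v) :
    T.toMatrix d *ᵥ Pi.single (T.ancestor v (j + 1)) 1 =
      d (T.ancestor v (j + 1)) • Pi.single (T.ancestor v (j + 1)) 1 +
        Pi.single (T.ancestor v j) 1 := by
  rw [toMatrix_mulVec_single, if_neg (T.ancestor_succ_ne_root hj), T.parent_ancestor_succ hj]

theorem toMatrix_mulVec_single_ancestor_zero (d : V → R) (v : V) :
    T.toMatrix d *ᵥ Pi.single (T.ancestor v 0) 1 =
      d (T.ancestor v 0) • Pi.single (T.ancestor v 0) 1 := by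
  rw [toMatrix_mulVec_single, if_pos (T.ancestor_zero v), add_zero]

theorem toMatrix_mulVec_eigenvector (d : V → R) (v : V) :
    T.toMatrix d *ᵥ T.eigenvector d v = d v • T.eigenvector d v := by
  let c (j : ℕ) : R := T.eigencoeff d v j
  let a (j : ℕ) : V := T.ancestor v j
  let e (j : ℕ) : V → R := Pi.single (a j) 1
  let D : ℕ := T.depth v
  calc T.toMatrix d *ᵥ T.eigenvector d v
      = ∑ j ∈ Finset.range (D + 1), c j • T.toMatrix d *ᵥ e j := by
        simp only [eigenvector, mulVec_sum, mulVec_smul, c, e, a, D]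
    _ = ∑ j ∈ Finset.range (D + 1), c j • d (a j) • e j +
          ∑ j ∈ Finset.range D, c (j + 1) • e j := by
        rw [Finset.sum_range_succ', Finset.sum_range_succ' (fun j => c j • d (a j) • e j),
          add_right_comm, ← Finset.sum_add_distrib, toMatrix_mulVec_single_ancestor_zero]
        congr 1
        refine Finset.sum_congr rfl fun j hj => ?_
        rw [toMatrix_mulVec_single_ancestor_succ T d (Finset.mem_range.1 hj), smul_add]
    _ = ∑ j ∈ Finset.range (D + 1), (c j • d (a j) • e j + c (j + 1) • e j) := by
        rw [Finset.sum_add_distrib, Finset.sum_range_succ (fun j => c (j + 1) • e j),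
          show c (D + 1) = 0 from T.eigencoeff_depth_succ d v, zero_smul, add_zero]
    _ = ∑ j ∈ Finset.range (D + 1), d v • c j • e j := by
        refine Finset.sum_congr rfl fun j _ => ?_
        rw [show c (j + 1) = c j * (d v - d (a j)) from T.eigencoeff_succ d v j]
        module
    _ = d v • T.eigenvector d v := by rw [eigenvector, Finset.smul_sum]

end SpanningInTree

end SpanningInTree

section Krylov

variable {V R S : Type*} [Fintype V] [DecidableEq V] [CommRing R] [CommRing S]

/-- The Krylov matrix of `(A, x)`, whose `m` columns are `x, A x, A² x, …`. Its transpose for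
`(Aᵀ, e_r)` is the observability matrix of `A` at the coordinate `r`. -/
def krylovMatrix (m : ℕ) (A : Matrix V V R) (x : V → R) : Matrix V (Fin m) R :=
  of fun v b => (A ^ (b : ℕ) *ᵥ x) v

theorem krylovMatrix_map (f : R →+* S) (m : ℕ) (A : Matrix V V R) (x : V → R) :
    (krylovMatrix m A x).map f = krylovMatrix m (A.map f) (f ∘ x) := by
  ext v b
  simp only [krylovMatrix, map_apply, of_apply, ← Matrix.map_pow, RingHom.map_mulVec]

theorem map_det_krylovMatrix {n : ℕ} (f : R →+* S) (A : Matrix (Fin n) (Fin n) R)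
    (x : Fin n → R) : f (krylovMatrix n A x).det = (krylovMatrix n (A.map f) (f ∘ x)).det := by
  rw [RingHom.map_det, RingHom.mapMatrix_apply, krylovMatrix_map]

theorem hankel_eq_krylovMatrix_transpose_mul (l m : ℕ) (A : Matrix V V R) (x : V → R) (r : V) :
    (of fun (a : Fin l) (b : Fin m) => (A ^ ((a : ℕ) + (b : ℕ)) *ᵥ x) r) =
      (krylovMatrix l Aᵀ (Pi.single r 1))ᵀ * krylovMatrix m A x := by
  ext a b
  have hrow (v : V) : krylovMatrix l Aᵀ (Pi.single r 1) v a = (A ^ (a : ℕ)) r v := by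
    simp only [krylovMatrix, of_apply, ← transpose_pow, mulVec_single_one, col_apply,
      transpose_apply]
  rw [of_apply, pow_add, ← mulVec_mulVec, mul_apply]
  simp only [transpose_apply, hrow]
  rfl

theorem dotProduct_pow_mulVec_of_vecMul_eq_smul {A : Matrix V V R} {μ : R} {w : V → R}
    (hw : w ᵥ* A = μ • w) (k : ℕ) (x : V → R) : w ⬝ᵥ (A ^ k *ᵥ x) = μ ^ k * (w ⬝ᵥ x) := by
  induction k with
  | zero => rw [pow_zero, one_mulVec, pow_zero, one_mul]
  | succ k ih =>
    rw [pow_succ', ← mulVec_mulVec, dotProduct_mulVec, hw, smul_dotProduct, ih, smul_eq_mul,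
      pow_succ', mul_assoc]

theorem of_mul_krylovMatrix {n : ℕ} {A : Matrix V V R} {d : Fin n → R} {w : Fin n → V → R}
    (hw : ∀ i, w i ᵥ* A = d i • w i) (x : V → R) :
    of w * krylovMatrix n A x = diagonal (fun i => w i ⬝ᵥ x) * vandermonde d := by
  ext i b
  rw [diagonal_mul, vandermonde_apply, mul_comm,
    ← dotProduct_pow_mulVec_of_vecMul_eq_smul (hw i)]
  rfl

theorem det_krylovMatrix_ne_zero [IsDomain R] {n : ℕ} {A : Matrix (Fin n) (Fin n) R}
    {x d : Fin n → R} {w : Fin n → Fin n → R} (hd : Function.Injective d)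
    (hw : ∀ i, w i ᵥ* A = d i • w i) (hx : ∀ i, w i ⬝ᵥ x ≠ 0) :
    (krylovMatrix n A x).det ≠ 0 := by
  have hdet : (of w).det * (krylovMatrix n A x).det =
      (∏ i, w i ⬝ᵥ x) * (vandermonde d).det := by
    rw [← det_mul, of_mul_krylovMatrix hw, det_mul, det_diagonal]
  refine right_ne_zero_of_mul (a := (of w).det) ?_
  rw [hdet]
  exact mul_ne_zero (Finset.prod_ne_zero_iff.2 fun i _ => hx i)
    (det_vandermonde_ne_zero_iff.2 hd)

theorem exists_det_krylovMatrix_transpose_ne_zero [IsDomain R] {n : ℕ} {E : Fin n → Fin n → Prop}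
    (hloop : ∀ v, E v v) {r : Fin n} (hconn : ∀ v, Relation.ReflTransGen E v r)
    {d : Fin n → R} (hd : Function.Injective d) :
    ∃ A : Matrix (Fin n) (Fin n) R, (∀ u v, ¬ E v u → A u v = 0) ∧
      (krylovMatrix n Aᵀ (Pi.single r 1)).det ≠ 0 := by
  obtain ⟨T⟩ := nonempty_spanningInTree hconn
  refine ⟨T.toMatrix d, fun u v => T.toMatrix_apply_eq_zero hloop d,
    det_krylovMatrix_ne_zero (w := T.eigenvector d) hd (fun v => ?_) fun v => ?_⟩
  · rw [vecMul_transpose, T.toMatrix_mulVec_eigenvector]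
  · rw [dotProduct_single_one, T.eigenvector_root]
    exact one_ne_zero

end Krylov

section TotalDegree

open MvPolynomial

variable {σ R ι : Type*} [CommRing R] [Fintype ι] [DecidableEq ι]

theorem totalDegree_det_le (M : Matrix ι ι (MvPolynomial σ R)) (c : ι → ℕ)
    (hM : ∀ i j, (M i j).totalDegree ≤ c j) : M.det.totalDegree ≤ ∑ j, c j := by
  rw [det_apply]
  refine totalDegree_finsetSum_le fun τ _ => ?_
  calc (Equiv.Perm.sign τ • ∏ j, M (τ j) j).totalDegree
      ≤ (∏ j, M (τ j) j).totalDegree := totalDegree_smul_le _ _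
    _ ≤ ∑ j, (M (τ j) j).totalDegree := totalDegree_finsetProd _ _
    _ ≤ ∑ j, c j := Finset.sum_le_sum fun j _ => hM _ _

theorem totalDegree_pow_mulVec_le {A : Matrix ι ι (MvPolynomial σ R)} {x : ι → MvPolynomial σ R}
    {a b : ℕ} (hA : ∀ u v, (A u v).totalDegree ≤ a) (hx : ∀ v, (x v).totalDegree ≤ b) (k : ℕ)
    (v : ι) : ((A ^ k *ᵥ x) v).totalDegree ≤ k * a + b := by
  induction k generalizing v with
  | zero => simpa using hx v
  | succ k ih =>
    rw [pow_succ', ← mulVec_mulVec]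
    refine totalDegree_finsetSum_le fun u _ => ?_
    calc (A v u * (A ^ k *ᵥ x) u).totalDegree
        ≤ (A v u).totalDegree + ((A ^ k *ᵥ x) u).totalDegree := totalDegree_mul _ _
      _ ≤ a + (k * a + b) := add_le_add (hA v u) (ih u)
      _ = (k + 1) * a + b := by ring

theorem totalDegree_det_krylovMatrix_le {n : ℕ} {A : Matrix (Fin n) (Fin n) (MvPolynomial σ R)}
    {x : Fin n → MvPolynomial σ R} {a b : ℕ} (hA : ∀ u v, (A u v).totalDegree ≤ a)
    (hx : ∀ v, (x v).totalDegree ≤ b) :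
    (krylovMatrix n A x).det.totalDegree ≤ ∑ k : Fin n, (k * a + b) :=
  totalDegree_det_le _ _ fun v k => totalDegree_pow_mulVec_le hA hx k v

end TotalDegree

section SchwartzZippel

open MvPolynomial Finset

variable {σ τ R : Type*} [Fintype σ] [DecidableEq σ] [Fintype τ] [DecidableEq τ]
  [CommRing R] [IsDomain R] [DecidableEq R]

theorem schwartz_zippel_fintype {P : MvPolynomial σ R} (hP : P ≠ 0) (S : Finset R) :
    #{f ∈ Fintype.piFinset fun _ : σ => S | eval f P = 0} /
      #(Fintype.piFinset fun _ : σ => S) ≤ (P.totalDegree / #S : ℚ≥0) := by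
  let e := Fintype.equivFin σ
  have hcard : #{f ∈ Fintype.piFinset fun _ : σ => S | eval f P = 0} =
      #{f ∈ Fintype.piFinset fun _ => S | eval f (rename e P) = 0} := by
    refine card_equiv (e.arrowCongr (Equiv.refl R)) fun f => ?_
    have hcomp : e.arrowCongr (Equiv.refl R) f ∘ e = f := by
      ext
      simp
    simp [eval_rename, hcomp, e.symm.forall_congr_left]
  have hP' : rename e P ≠ 0 := (map_ne_zero_iff _ (rename_injective e e.injective)).2 hP
  calc _ = (#{f ∈ Fintype.piFinset fun _ => S | eval f (rename e P) = 0} /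
        #S ^ Fintype.card σ : ℚ≥0) := by simp [hcard]
    _ ≤ (rename e P).totalDegree / #S := schwartz_zippel_totalDegree hP' S
    _ ≤ P.totalDegree / #S := by gcongr; exact totalDegree_rename_le _ _

theorem schwartz_zippel_sum {P : MvPolynomial (σ ⊕ τ) R} (hP : P ≠ 0) (S : Finset R) :
    #{ω ∈ (Fintype.piFinset fun _ : σ => S) ×ˢ (Fintype.piFinset fun _ : τ => S) |
        eval (Sum.elim ω.1 ω.2) P = 0} /
      #((Fintype.piFinset fun _ : σ => S) ×ˢ (Fintype.piFinset fun _ : τ => S)) ≤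
      (P.totalDegree / #S : ℚ≥0) := by
  let e := (Equiv.sumArrowEquivProdArrow σ τ R).symm
  set Ω := (Fintype.piFinset fun _ : σ => S) ×ˢ (Fintype.piFinset fun _ : τ => S) with hΩ
  have hmem (ω : (σ → R) × (τ → R)) : ω ∈ Ω ↔ e ω ∈ Fintype.piFinset fun _ => S := by
    simp [hΩ, e, Equiv.sumArrowEquivProdArrow]
  have hzeros : #{ω ∈ Ω | eval (Sum.elim ω.1 ω.2) P = 0} =
      #{f ∈ Fintype.piFinset fun _ => S | eval f P = 0} :=
    card_equiv e fun ω => by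
      rw [mem_filter, mem_filter, hmem]
      rfl
  rw [hzeros, card_equiv e hmem]
  exact schwartz_zippel_fintype hP S

theorem one_sub_le_card_eval_ne_zero_div_card {P : MvPolynomial (σ ⊕ τ) R} (hP : P ≠ 0)
    {S : Finset R} (hS : S.Nonempty) :
    1 - (P.totalDegree : ℝ) / #S ≤
      #{ω ∈ (Fintype.piFinset fun _ : σ => S) ×ˢ (Fintype.piFinset fun _ : τ => S) |
          eval (Sum.elim ω.1 ω.2) P ≠ 0} /
        #((Fintype.piFinset fun _ : σ => S) ×ˢ (Fintype.piFinset fun _ : τ => S)) := by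
  have hzero := schwartz_zippel_sum hP S
  set Ω := (Fintype.piFinset fun _ : σ => S) ×ˢ (Fintype.piFinset fun _ : τ => S)
  have hΩ : (#Ω : ℝ) ≠ 0 := by
    simp [Ω, Fintype.card_piFinset, hS.ne_empty]
  have hsum : (#{ω ∈ Ω | eval (Sum.elim ω.1 ω.2) P = 0} : ℝ) +
      #{ω ∈ Ω | eval (Sum.elim ω.1 ω.2) P ≠ 0} = #Ω := mod_cast card_filter_add_card_filter_not _
  rw [← sub_eq_of_eq_add' hsum.symm, sub_div, div_self hΩ]
  refine sub_le_sub_left ?_ 1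
  simpa only [NNRat.cast_div, NNRat.cast_natCast] using (NNRat.cast_le (K := ℝ)).2 hzero

end SchwartzZippel

section Generic

open MvPolynomial

/-- The matrix with entry `w (v, u)` at `(u, v)` if `E v u`, and `0` otherwise: the version of
`graphMat` over an arbitrary ring and vertex set, for which `w` can consist of indeterminates. -/
def weightMatrix {V R : Type*} [Zero R] (E : V → V → Prop) [DecidableRel E]
    (w : {p : V × V // E p.1 p.2} → R) : Matrix V V R :=
  of fun u v => if h : E v u then w ⟨(v, u), h⟩ else 0

theorem graphMat_eq_weightMatrix {n : ℕ} {F : Type*} [Field F] (E : Fin n → Fin n → Prop)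
    [DecidableRel E] (w : {p : Fin n × Fin n // E p.1 p.2} → F) :
    graphMat E w = weightMatrix E w := rfl

theorem weightMatrix_map {V R S : Type*} [NonAssocSemiring R] [NonAssocSemiring S] (f : R →+* S)
    (E : V → V → Prop) [DecidableRel E] (w : {p : V × V // E p.1 p.2} → R) :
    (weightMatrix E w).map f = weightMatrix E (f ∘ w) := by
  ext u v
  by_cases h : E v u <;> simp [weightMatrix, h]

theorem weightMatrix_restrict {V R : Type*} [Zero R] {E : V → V → Prop} [DecidableRel E]
    {A : Matrix V V R} (hA : ∀ u v, ¬ E v u → A u v = 0) :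
    weightMatrix E (fun p => A p.1.2 p.1.1) = A := by
  ext u v
  by_cases h : E v u <;> simp [weightMatrix, h, hA]

variable {n : ℕ} (E : Fin n → Fin n → Prop) [DecidableRel E] (R : Type*) [CommRing R]

/-- The weighted adjacency matrix of the graph `E` whose edge weights are indeterminates. -/
noncomputable def genericMatrix :
    Matrix (Fin n) (Fin n) (MvPolynomial ({p : Fin n × Fin n // E p.1 p.2} ⊕ Fin n) R) :=
  weightMatrix E (X ∘ Sum.inl)

/-- The vector whose entries are indeterminates, independent of those of `genericMatrix E R`. -/
noncomputable def genericVector :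
    Fin n → MvPolynomial ({p : Fin n × Fin n // E p.1 p.2} ⊕ Fin n) R :=
  X ∘ Sum.inr

/-- The product of the determinants whose nonvanishing makes all the Hankel matrices invertible:
those of the Krylov matrix of the generic pair `(A, x)` and of all its observability matrices. -/
noncomputable def genericDet : MvPolynomial ({p : Fin n × Fin n // E p.1 p.2} ⊕ Fin n) R :=
  (krylovMatrix n (genericMatrix E R) (genericVector E R)).det *
    ∏ r, (krylovMatrix n (genericMatrix E R)ᵀ (Pi.single r 1)).det

variable {R} in
theorem genericMatrix_map_aeval {S : Type*} [CommRing S] [Algebra R S]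
    (w : {p : Fin n × Fin n // E p.1 p.2} → S) (x : Fin n → S) :
    (genericMatrix E R).map (aeval (R := R) (Sum.elim w x)).toRingHom = weightMatrix E w := by
  rw [genericMatrix, weightMatrix_map]
  congr 1
  ext p
  simp

theorem aeval_det_krylovMatrix_generic {S : Type*} [CommRing S] [Algebra R S]
    (w : {p : Fin n × Fin n // E p.1 p.2} → S) (x : Fin n → S) :
    aeval (Sum.elim w x) (krylovMatrix n (genericMatrix E R) (genericVector E R)).det =
      (krylovMatrix n (weightMatrix E w) x).det := by
  have hx : (aeval (R := R) (Sum.elim w x)).toRingHom ∘ genericVector E R = x := by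
    ext i
    simp [genericVector]
  have hmap := map_det_krylovMatrix (aeval (R := R) (Sum.elim w x)).toRingHom
    (genericMatrix E R) (genericVector E R)
  rwa [hx, genericMatrix_map_aeval] at hmap

theorem aeval_det_krylovMatrix_generic_transpose {S : Type*} [CommRing S] [Algebra R S]
    (w : {p : Fin n × Fin n // E p.1 p.2} → S) (x : Fin n → S) (r : Fin n) :
    aeval (Sum.elim w x) (krylovMatrix n (genericMatrix E R)ᵀ (Pi.single r 1)).det =
      (krylovMatrix n (weightMatrix E w)ᵀ (Pi.single r 1)).det := by
  have hsingle : (aeval (R := R) (Sum.elim w x)).toRingHom ∘ Pi.single r 1 = Pi.single r 1 := by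
    ext i
    simp only [Function.comp_apply, Pi.single_apply]
    split_ifs <;> simp
  have hmap := map_det_krylovMatrix (aeval (R := R) (Sum.elim w x)).toRingHom
    (genericMatrix E R)ᵀ (Pi.single r 1)
  rwa [hsingle, transpose_map, genericMatrix_map_aeval] at hmap

variable {E} in
theorem det_krylovMatrix_generic_ne_zero [IsDomain R] (hloop : ∀ v, E v v) {s : Fin n}
    (hconn : ∀ v, Relation.ReflTransGen E s v) :
    (krylovMatrix n (genericMatrix E R) (genericVector E R)).det ≠ 0 := by
  obtain ⟨A, hA, hdet⟩ := exists_det_krylovMatrix_transpose_ne_zero (E := Function.swap E) hloop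
    (fun v => Relation.reflTransGen_swap.2 (hconn v)) (X_injective (σ := Fin n) (R := R))
  rw [← weightMatrix_restrict (E := E) (A := Aᵀ) fun u v h => hA v u h,
    ← aeval_det_krylovMatrix_generic E R] at hdet
  exact ne_zero_of_map hdet

variable {E} in
theorem det_krylovMatrix_generic_transpose_ne_zero [IsDomain R] (hloop : ∀ v, E v v) {r : Fin n}
    (hconn : ∀ v, Relation.ReflTransGen E v r) :
    (krylovMatrix n (genericMatrix E R)ᵀ (Pi.single r 1)).det ≠ 0 := by
  obtain ⟨A, hA, hdet⟩ := exists_det_krylovMatrix_transpose_ne_zero hloop hconn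
    (X_injective (σ := Fin n) (R := R))
  rw [← weightMatrix_restrict hA, ← aeval_det_krylovMatrix_generic_transpose E R _ 0] at hdet
  exact ne_zero_of_map hdet

variable {E} in
theorem genericDet_ne_zero [IsDomain R] (hconn : ∀ u v, Relation.ReflTransGen E u v)
    (hloop : ∀ v, E v v) : genericDet E R ≠ 0 := by
  refine mul_ne_zero ?_ (Finset.prod_ne_zero_iff.2 fun r _ =>
    det_krylovMatrix_generic_transpose_ne_zero R hloop fun v => hconn v r)
  rcases isEmpty_or_nonempty (Fin n) with _ | ⟨⟨s⟩⟩
  · rw [det_isEmpty]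
    exact one_ne_zero
  · exact det_krylovMatrix_generic_ne_zero R hloop (hconn s)

variable {E R} in
theorem det_hankel_ne_zero_of_eval_genericDet_ne_zero
    {w : {p : Fin n × Fin n // E p.1 p.2} → R} {x : Fin n → R} [IsDomain R]
    (h : eval (Sum.elim w x) (genericDet E R) ≠ 0) (r : Fin n) :
    (of fun a b : Fin n => (weightMatrix E w ^ ((a : ℕ) + (b : ℕ)) *ᵥ x) r).det ≠ 0 := by
  rw [← aeval_eq_eval, genericDet, map_mul, map_prod, aeval_det_krylovMatrix_generic] at h
  have hobs := Finset.prod_ne_zero_iff.1 (right_ne_zero_of_mul h) r (Finset.mem_univ r)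
  rw [aeval_det_krylovMatrix_generic_transpose] at hobs
  rw [hankel_eq_krylovMatrix_transpose_mul, det_mul, det_transpose]
  exact mul_ne_zero hobs (left_ne_zero_of_mul h)

theorem totalDegree_genericMatrix_apply_le [Nontrivial R] (u v : Fin n) :
    (genericMatrix E R u v).totalDegree ≤ 1 := by
  by_cases h : E v u <;> simp [genericMatrix, weightMatrix, h]

theorem two_mul_totalDegree_genericDet_le [Nontrivial R] :
    2 * (genericDet E R).totalDegree ≤ n ^ 3 + n := by
  have hkrylov : (krylovMatrix n (genericMatrix E R) (genericVector E R)).det.totalDegree ≤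
      ∑ k : Fin n, ((k : ℕ) * 1 + 1) :=
    totalDegree_det_krylovMatrix_le (totalDegree_genericMatrix_apply_le E R) fun v =>
      (totalDegree_X _).le
  have hobs (r : Fin n) :
      (krylovMatrix n (genericMatrix E R)ᵀ (Pi.single r 1)).det.totalDegree ≤
        ∑ k : Fin n, ((k : ℕ) * 1 + 0) :=
    totalDegree_det_krylovMatrix_le (fun u v => totalDegree_genericMatrix_apply_le E R v u)
      fun v => by rw [Pi.single_apply]; split_ifs <;> simp
  have hgauss : 2 * ∑ k : Fin n, (k : ℕ) + n = n ^ 2 := by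
    rw [Fin.sum_univ_eq_sum_range (fun k => k), mul_comm, Finset.sum_range_id_mul_two]
    cases n with
    | zero => rfl
    | succ n => rw [Nat.add_sub_cancel]; ring
  calc 2 * (genericDet E R).totalDegree
      ≤ 2 * (∑ k : Fin n, ((k : ℕ) * 1 + 1) + ∑ _r : Fin n, ∑ k : Fin n, ((k : ℕ) * 1 + 0)) := by
        gcongr
        refine (totalDegree_mul _ _).trans (add_le_add hkrylov ?_)
        exact (totalDegree_finsetProd _ _).trans (Finset.sum_le_sum fun r _ => hobs r)
    _ = n ^ 3 + n := by
        simp only [mul_one, add_zero, Finset.sum_add_distrib, Finset.sum_const, Finset.card_univ,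
          Fintype.card_fin, smul_eq_mul]
        linear_combination (n + 1) * hgauss

end Generic

open Finset in
theorem hankel_all_invertible_prob_general {n : ℕ} {R : Type*} [CommRing R] [IsDomain R]
    [DecidableEq R] (E : Fin n → Fin n → Prop) [DecidableRel E]
    (hconn : ∀ u v : Fin n, Relation.ReflTransGen E u v) (hloop : ∀ v : Fin n, E v v)
    {S : Finset R} (hS : S.Nonempty) :
    1 - ((n : ℝ) ^ 3 + n) / (2 * #S) ≤
      #{ω ∈ (Fintype.piFinset fun _ : {p : Fin n × Fin n // E p.1 p.2} => S) ×ˢ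
            (Fintype.piFinset fun _ : Fin n => S) |
          ∀ r : Fin n, (of fun a b : Fin n =>
            (weightMatrix E ω.1 ^ ((a : ℕ) + (b : ℕ)) *ᵥ ω.2) r).det ≠ 0} /
        #((Fintype.piFinset fun _ : {p : Fin n × Fin n // E p.1 p.2} => S) ×ˢ
            (Fintype.piFinset fun _ : Fin n => S)) := by
  have hdegree : 2 * ((genericDet E R).totalDegree : ℝ) ≤ (n : ℝ) ^ 3 + n :=
    mod_cast two_mul_totalDegree_genericDet_le E R
  calc 1 - ((n : ℝ) ^ 3 + n) / (2 * #S)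
      ≤ 1 - (2 * (genericDet E R).totalDegree) / (2 * #S) := by gcongr
    _ = 1 - (genericDet E R).totalDegree / #S := by rw [mul_div_mul_left _ _ two_ne_zero]
    _ ≤ _ := one_sub_le_card_eval_ne_zero_div_card (genericDet_ne_zero R hconn hloop) hS
    _ ≤ _ := by
      gcongr with ω
      exact det_hankel_ne_zero_of_eval_genericDet_ne_zero

/-- For a strongly connected digraph with self-loops on `n` vertices, over a finite field
with `q ≥ (n³+n)/2` elements, if the edge weights of `A` and the entries of `x` are
i.i.d. uniform, then the probability (fraction of outcomes) that all the `n × n` Hankel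
matrices `H_n^(r)`, `r = 1, …, n`, are simultaneously invertible is at least
`1 - (n³+n)/(2q)`. -/
theorem hankel_all_invertible_prob {n : ℕ} {F : Type*} [Field F] [Fintype F] [DecidableEq F]
    (E : Fin n → Fin n → Prop) [DecidableRel E]
    (hconn : ∀ u v : Fin n, Relation.ReflTransGen E u v)
    (hloop : ∀ v : Fin n, E v v)
    (hq : n ^ 3 + n ≤ 2 * Fintype.card F) :
    1 - ((n : ℝ) ^ 3 + n) / (2 * Fintype.card F) ≤
      ((Finset.univ.filter fun ω : ({p : Fin n × Fin n // E p.1 p.2} → F) × (Fin n → F) =>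
          ∀ r : Fin n, (Matrix.det (Matrix.of fun a b : Fin n =>
            ((graphMat E ω.1 ^ ((a : ℕ) + (b : ℕ))) *ᵥ ω.2) r)) ≠ 0).card : ℝ)
        / Fintype.card (({p : Fin n × Fin n // E p.1 p.2} → F) × (Fin n → F)) := by
  convert hankel_all_invertible_prob_general E hconn hloop (Finset.univ_nonempty (α := F)) <;>
    simp [graphMat_eq_weightMatrix]
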